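/- Let Ω ⊂ ℝⁿ (n ≥ 2) be a bounded open convex domain and let u be a function of class C³ on a neighborhood of the closure of Ω that is strictly convex (its Hessian D²u is positive definite) and satisfies det D²u = 1 in Ω together with u = 0 on ∂Ω. Then the function ψ(x) = Σ_{k,l=1}^n b^{kl}(x) u_k(x) u_l(x) − 2(n−1)u(x), where b^{kl} = (Δu) δ_{kl} − u_{kl}, attains its maximum over the closure of Ω on the boundary ∂Ω; i.e., for every x ∈ Ω, ψ(x) ≤ sup_{y ∈ ∂Ω} ψ(y). -/

import Mathlib

/-!
Let `L = ∑ u^{ij} ∂ᵢⱼ` be the linearized operator, where `(u^{ij}) = (D²u)⁻¹`. Differentiating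
`det D²u = 1` gives `L u_k = 0`, and `L u = n`. If `u` were `C⁴`, the product rule would give

  `L ψ = ∑ (L b^{kl}) u_k u_l + 4 ∑ (∂ₖ b^{kl}) u_l + 2 ∑ b^{kl} u_{kl} - 2n(n-1)`.

Here `∑ₖ ∂ₖ b^{kl} = 0`; the sum `∑ b^{kl} u_{kl} = 2 σ₂(D²u)` is at least `n(n-1)` by Maclaurin's
inequality (`sigma_two_ge`); and `L u_{kl} = tr (A⁻¹ T_k A⁻¹ T_l)` with `A = D²u`, `T_k = ∂ₖ D²u`, so
that the first sum is nonnegative by Cauchy-Schwarz (`gram_nonneg`). Hence `L ψ ≥ 0` and the maximum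
principle applies.

Since `u` is only `C³`, `ψ` is merely `C¹`. The second derivatives inside `b^{kl}` are therefore
replaced by difference quotients of the first derivatives, which gives `C²` functions `Phi`
approximating `ψ`. The equation `L u_l = 0` at two neighbouring points shows
(`Lop_dq_pd`) that `L` of such a difference quotient involves only third derivatives of `u`; by strict
differentiability it converges to `tr (A⁻¹ T_k A⁻¹ T_l)` as the step tends to zero, even with moving
base points. If `ψ` exceeded its boundary supremum, `ψ + δ|x|²` would have an interior maximum `y`, and
`ψ + δ|x|² - δ/2 |x - y|²` a strict one. Maximizers of the corresponding `Phi` converge to `y`; there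
`L Phi ≤ 0`, and in the limit this contradicts the positivity of the formal expression (`limit_pos`).
-/

open scoped BigOperators

/-- First partial derivative in direction `i`. -/
noncomputable def pd {n : ℕ} (i : Fin n) (f : EuclideanSpace ℝ (Fin n) → ℝ) :
    EuclideanSpace ℝ (Fin n) → ℝ :=
  fun x => fderiv ℝ f x (EuclideanSpace.single i 1)

/-- The Hessian matrix `(u_{ij})` of `u` at `x`. -/
noncomputable def hess {n : ℕ} (u : EuclideanSpace ℝ (Fin n) → ℝ)
    (x : EuclideanSpace ℝ (Fin n)) : Matrix (Fin n) (Fin n) ℝ :=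
  Matrix.of fun i j => pd i (pd j u) x

/-- `b^{kl} = (Δu) δ_{kl} − u_{kl} = ∂σ₂(D²u)/∂u_{kl}`. -/
noncomputable def bMat {n : ℕ} (u : EuclideanSpace ℝ (Fin n) → ℝ)
    (x : EuclideanSpace ℝ (Fin n)) : Matrix (Fin n) (Fin n) ℝ :=
  (hess u x).trace • (1 : Matrix (Fin n) (Fin n) ℝ) - hess u x

/-- `ψ = Σ b^{kl} u_k u_l − 2(n−1)u`. -/
noncomputable def psiFn {n : ℕ} (u : EuclideanSpace ℝ (Fin n) → ℝ)
    (x : EuclideanSpace ℝ (Fin n)) : ℝ :=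
  (∑ k, ∑ l, bMat u x k l * pd k u x * pd l u x) - 2 * ((n : ℝ) - 1) * u x

/-! ### Inequalities for positive definite matrices -/

open Matrix MatrixOrder in
lemma exists_transpose_mul_self {n : ℕ} {A : Matrix (Fin n) (Fin n) ℝ} (hA : A.PosSemidef) :
    ∃ C : Matrix (Fin n) (Fin n) ℝ, A = Cᵀ * C := by
  obtain ⟨C, hC⟩ := CStarAlgebra.nonneg_iff_eq_star_mul_self.1 hA.nonneg
  exact ⟨C, by rw [hC, Matrix.star_eq_conjTranspose, Matrix.conjTranspose_eq_transpose_of_trivial]⟩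

/-- The arithmetic-geometric mean inequality for the eigenvalues, via `1 + log λ ≤ λ`. -/
lemma card_le_trace {n : ℕ} {A : Matrix (Fin n) (Fin n) ℝ} (hA : A.PosDef) (hd : A.det = 1) :
    (n : ℝ) ≤ A.trace := by
  have hp := hA.eigenvalues_pos
  have h1 : ∏ i, hA.isHermitian.eigenvalues i = 1 := by
    have := hA.isHermitian.det_eq_prod_eigenvalues
    simpa [hd] using this.symm
  have h2 : ∑ i, Real.log (hA.isHermitian.eigenvalues i) = 0 := by
    rw [← Real.log_prod (fun i _ => (hp i).ne'), h1, Real.log_one]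
  have h3 : A.trace = ∑ i, hA.isHermitian.eigenvalues i := by
    simpa using hA.isHermitian.trace_eq_sum_eigenvalues
  have h4 : ∑ i, (1 + Real.log (hA.isHermitian.eigenvalues i)) ≤
      ∑ i, hA.isHermitian.eigenvalues i := by
    refine Finset.sum_le_sum fun i _ => ?_
    linarith [Real.log_le_sub_one_of_pos (hp i)]
  rw [Finset.sum_add_distrib, h2] at h4
  simpa [h3] using h4

/-- Maclaurin's inequality `σ₂ ≥ n(n-1)/2` for a positive definite matrix of determinant one: sum
`1 + log (λᵢ λⱼ) ≤ λᵢ λⱼ` over `i ≠ j`. -/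
lemma sigma_two_ge {n : ℕ} {A : Matrix (Fin n) (Fin n) ℝ} (hA : A.PosDef) (hd : A.det = 1) :
    (n : ℝ) * (n - 1) ≤ A.trace ^ 2 - (A * A).trace := by
  have hp := hA.eigenvalues_pos
  have h1 : ∏ i, hA.isHermitian.eigenvalues i = 1 := by
    have := hA.isHermitian.det_eq_prod_eigenvalues
    simpa [hd] using this.symm
  have h3 : A.trace = ∑ i, hA.isHermitian.eigenvalues i := by
    simpa using hA.isHermitian.trace_eq_sum_eigenvalues
  have h5 : (A * A).trace = ∑ i, hA.isHermitian.eigenvalues i ^ 2 := by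
    have hs := hA.isHermitian.spectral_theorem
    conv_lhs => rw [hs]
    rw [← map_mul, Unitary.conjStarAlgAut_apply, Matrix.trace_mul_cycle]
    simp [Matrix.trace_diagonal, pow_two]
  set e := hA.isHermitian.eigenvalues
  have h2 : ∑ i, Real.log (e i) = 0 := by
    rw [← Real.log_prod (fun i _ => (hp i).ne'), h1, Real.log_one]
  have h6 : ∑ i, ∑ j, (if i = j then 0 else 1 + (Real.log (e i) + Real.log (e j))) ≤
      ∑ i, ∑ j, (if i = j then 0 else e i * e j) := by
    refine Finset.sum_le_sum fun i _ => Finset.sum_le_sum fun j _ => ?_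
    split_ifs
    · exact le_rfl
    · rw [← Real.log_mul (hp i).ne' (hp j).ne']
      linarith [Real.log_le_sub_one_of_pos (mul_pos (hp i) (hp j))]
  have key : ∀ f : Fin n → Fin n → ℝ, ∑ i, ∑ j, (if i = j then 0 else f i j) =
      ∑ i, ∑ j, f i j - ∑ i, f i i := by
    intro f
    rw [← Finset.sum_sub_distrib]
    refine Finset.sum_congr rfl fun i _ => ?_
    rw [eq_sub_iff_add_eq]
    have : f i i = ∑ j, if i = j then f i j else 0 := by simp
    rw [this, ← Finset.sum_add_distrib]
    refine Finset.sum_congr rfl fun j _ => ?_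
    split_ifs <;> simp
  rw [key, key] at h6
  simp only [Finset.sum_add_distrib, h2, Finset.sum_const, Finset.card_univ, Fintype.card_fin,
    nsmul_eq_mul, ← Finset.mul_sum, ← Finset.sum_mul, ← pow_two] at h6
  rw [h3, h5]
  nlinarith [h6]

/-- Cauchy-Schwarz for the Gram matrix of symmetric matrices `T k` under the scalar product
`⟨S, T⟩ = tr (B S B T)`. -/
lemma gram_nonneg {n : ℕ} {B : Matrix (Fin n) (Fin n) ℝ} (hB : B.PosSemidef)
    (T : Fin n → Matrix (Fin n) (Fin n) ℝ) (hT : ∀ k, (T k).transpose = T k) (v : Fin n → ℝ) :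
    0 ≤ ∑ k, ∑ l, ((∑ m, (B * T m * B * T m).trace) * (1 : Matrix (Fin n) (Fin n) ℝ) k l
      - (B * T k * B * T l).trace) * v k * v l := by
  obtain ⟨C, rfl⟩ := exists_transpose_mul_self hB
  have hG : ∀ k l, (C.transpose * C * T k * (C.transpose * C) * T l).trace =
      ∑ a, ∑ b, (C * T k * C.transpose) a b * (C * T l * C.transpose) a b := by
    intro k l
    have h1 : (C.transpose * C * T k * (C.transpose * C) * T l).trace =
        ((C * T k * C.transpose) * (C * T l * C.transpose).transpose).trace := by
      simp only [Matrix.transpose_mul, hT, Matrix.transpose_transpose]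
      rw [Matrix.mul_assoc, Matrix.mul_assoc, Matrix.mul_assoc, Matrix.trace_mul_comm]
      simp only [Matrix.mul_assoc]
    rw [h1]
    rw [Matrix.trace]
    refine Finset.sum_congr rfl fun a _ => ?_
    rw [Matrix.diag_apply, Matrix.mul_apply]
    rfl
  simp only [hG]
  set S := fun k => C * T k * C.transpose
  have e : ∑ k, ∑ l, ((∑ m, ∑ a, ∑ b, S m a b * S m a b) * (1 : Matrix (Fin n) (Fin n) ℝ) k l
      - ∑ a, ∑ b, S k a b * S l a b) * v k * v l =
      ∑ a, ∑ b, ((∑ m, S m a b ^ 2) * (∑ k, v k ^ 2) - (∑ k, S k a b * v k) ^ 2) := by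
    simp only [sub_mul, Finset.sum_sub_distrib]
    congr 1
    · simp only [Matrix.one_apply, mul_ite, mul_one, mul_zero, ite_mul, zero_mul,
        Finset.sum_ite_eq, Finset.mem_univ, if_true, mul_assoc, ← Finset.mul_sum,
        ← Finset.sum_mul, ← pow_two]
      congr 1
      rw [Finset.sum_comm]
      exact Finset.sum_congr rfl fun a _ => Finset.sum_comm
    · simp only [pow_two, Finset.sum_mul, Finset.mul_sum]
      simp only [← Finset.sum_product' Finset.univ Finset.univ]
      rw [Finset.sum_comm]
      refine Finset.sum_congr rfl fun a _ => Finset.sum_congr rfl fun b _ => ?_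
      ring
  rw [show (∑ k, ∑ l, ((∑ m, ∑ a, ∑ b, (C * T m * C.transpose) a b * (C * T m * C.transpose) a b)
    * (1 : Matrix (Fin n) (Fin n) ℝ) k l - ∑ a, ∑ b, (C * T k * C.transpose) a b *
    (C * T l * C.transpose) a b) * v k * v l) = _ from e]
  refine Finset.sum_nonneg fun a _ => Finset.sum_nonneg fun b _ => ?_
  linarith [Finset.sum_mul_sq_le_sq_mul_sq Finset.univ (fun k => S k a b) v]

/-! ### Partial derivatives and constant-coefficient operators -/

section Calculus

open Filter Topology

variable {n : ℕ} {f g : EuclideanSpace ℝ (Fin n) → ℝ} {x : EuclideanSpace ℝ (Fin n)}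

lemma contDiffAt_pd {m k : WithTop ℕ∞} (hf : ContDiffAt ℝ k f x) (hm : m + 1 ≤ k) (i : Fin n) :
    ContDiffAt ℝ m (pd i f) x :=
  (hf.fderiv_right hm).clm_apply contDiffAt_const

lemma pd_congr (h : f =ᶠ[𝓝 x] g) (i : Fin n) : pd i f x = pd i g x := by
  simp only [pd, h.fderiv_eq]

lemma pd_add (hf : DifferentiableAt ℝ f x) (hg : DifferentiableAt ℝ g x) (i : Fin n) :
    pd i (fun y => f y + g y) x = pd i f x + pd i g x := by
  simp [pd, fderiv_fun_add hf hg]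

lemma pd_const_mul (c : ℝ) (hf : DifferentiableAt ℝ f x) (i : Fin n) :
    pd i (fun y => c * f y) x = c * pd i f x := by
  simp [pd, fderiv_const_mul hf]

lemma pd_mul (hf : DifferentiableAt ℝ f x) (hg : DifferentiableAt ℝ g x) (i : Fin n) :
    pd i (fun y => f y * g y) x = pd i f x * g x + f x * pd i g x := by
  simp [pd, fderiv_fun_mul hf hg]; ring

lemma pd_comm (hf : ContDiffAt ℝ 2 f x) (i j : Fin n) : pd i (pd j f) x = pd j (pd i f) x := by
  have hd : DifferentiableAt ℝ (fderiv ℝ f) x :=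
    (hf.fderiv_right (m := 1) (by norm_num)).differentiableAt (by norm_num)
  have key : ∀ i j : Fin n, pd i (pd j f) x =
      fderiv ℝ (fderiv ℝ f) x (EuclideanSpace.single i 1) (EuclideanSpace.single j 1) := by
    intro i j
    have : pd j f = fun y => fderiv ℝ f y (EuclideanSpace.single j 1) := rfl
    rw [this, pd, fderiv_clm_apply hd (differentiableAt_const _)]
    simp
  rw [key, key]
  exact (hf.isSymmSndFDerivAt (by simp)) _ _

lemma eventually_differentiableAt (hf : ContDiffAt ℝ 2 f x) :
    ∀ᶠ y in 𝓝 x, DifferentiableAt ℝ f y := by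
  filter_upwards [hf.eventually (by simp)] with y hy
  exact hy.differentiableAt (by norm_num)

lemma differentiableAt_pd (hf : ContDiffAt ℝ 2 f x) (i : Fin n) : DifferentiableAt ℝ (pd i f) x :=
  (contDiffAt_pd (m := 1) hf (by norm_num) i).differentiableAt (by norm_num)

lemma pd_pd_add (hf : ContDiffAt ℝ 2 f x) (hg : ContDiffAt ℝ 2 g x) (i j : Fin n) :
    pd i (pd j (fun y => f y + g y)) x = pd i (pd j f) x + pd i (pd j g) x := by
  have : pd j (fun y => f y + g y) =ᶠ[𝓝 x] fun y => pd j f y + pd j g y := by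
    filter_upwards [eventually_differentiableAt hf, eventually_differentiableAt hg] with y h1 h2
    exact pd_add h1 h2 j
  rw [pd_congr this, pd_add (differentiableAt_pd hf j) (differentiableAt_pd hg j)]

lemma pd_pd_const_mul (c : ℝ) (hf : ContDiffAt ℝ 2 f x) (i j : Fin n) :
    pd i (pd j (fun y => c * f y)) x = c * pd i (pd j f) x := by
  have : pd j (fun y => c * f y) =ᶠ[𝓝 x] fun y => c * pd j f y := by
    filter_upwards [eventually_differentiableAt hf] with y h1
    exact pd_const_mul c h1 j
  rw [pd_congr this, pd_const_mul c (differentiableAt_pd hf j)]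

lemma pd_pd_mul (hf : ContDiffAt ℝ 2 f x) (hg : ContDiffAt ℝ 2 g x) (i j : Fin n) :
    pd i (pd j (fun y => f y * g y)) x = pd i (pd j f) x * g x + f x * pd i (pd j g) x
      + pd i f x * pd j g x + pd j f x * pd i g x := by
  have : pd j (fun y => f y * g y) =ᶠ[𝓝 x] fun y => pd j f y * g y + f y * pd j g y := by
    filter_upwards [eventually_differentiableAt hf, eventually_differentiableAt hg] with y h1 h2
    exact pd_mul h1 h2 j
  have hf' := hf.differentiableAt (by norm_num)
  have hg' := hg.differentiableAt (by norm_num)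
  rw [pd_congr this, pd_add ((differentiableAt_pd hf j).fun_mul hg')
    (hf'.fun_mul (differentiableAt_pd hg j)), pd_mul (differentiableAt_pd hf j) hg',
    pd_mul hf' (differentiableAt_pd hg j)]
  ring

/-- The constant-coefficient operator `f ↦ ∑ B_{ij} f_{ij}`. -/
noncomputable def Lop (B : Matrix (Fin n) (Fin n) ℝ) (f : EuclideanSpace ℝ (Fin n) → ℝ)
    (x : EuclideanSpace ℝ (Fin n)) : ℝ :=
  ∑ i, ∑ j, B i j * pd i (pd j f) x

variable (B : Matrix (Fin n) (Fin n) ℝ)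

lemma Lop_add (hf : ContDiffAt ℝ 2 f x) (hg : ContDiffAt ℝ 2 g x) :
    Lop B (fun y => f y + g y) x = Lop B f x + Lop B g x := by
  simp only [Lop, pd_pd_add hf hg, mul_add, Finset.sum_add_distrib]

lemma Lop_const_mul (c : ℝ) (hf : ContDiffAt ℝ 2 f x) :
    Lop B (fun y => c * f y) x = c * Lop B f x := by
  simp only [Lop, pd_pd_const_mul c hf, Finset.mul_sum, mul_left_comm]

lemma Lop_const (c : ℝ) : Lop B (fun _ => c) x = 0 := by
  have h : ∀ j : Fin n, pd j (fun _ : EuclideanSpace ℝ (Fin n) => c) = fun _ => (0 : ℝ) := by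
    intro j; funext y; simp [pd]
  have h' : ∀ i : Fin n, pd i (fun _ : EuclideanSpace ℝ (Fin n) => (0 : ℝ)) x = 0 := by
    intro j; simp [pd]
  simp [Lop, h, h']

lemma Lop_sum {ι : Type*} (s : Finset ι) (F : ι → EuclideanSpace ℝ (Fin n) → ℝ)
    (hF : ∀ a ∈ s, ContDiffAt ℝ 2 (F a) x) :
    Lop B (fun y => ∑ a ∈ s, F a y) x = ∑ a ∈ s, Lop B (F a) x := by
  classical
  induction s using Finset.induction_on with
  | empty => simp [Lop_const]
  | insert a s ha ih =>
    simp only [Finset.sum_insert ha]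
    rw [Lop_add B (hF a (by simp))
      (ContDiffAt.sum fun b hb => hF b (by simp [hb])), ih fun b hb => hF b (by simp [hb])]

lemma pd_sum {ι : Type*} (s : Finset ι) (F : ι → EuclideanSpace ℝ (Fin n) → ℝ)
    (hF : ∀ a ∈ s, DifferentiableAt ℝ (F a) x) (i : Fin n) :
    pd i (fun y => ∑ a ∈ s, F a y) x = ∑ a ∈ s, pd i (F a) x := by
  simp [pd, fderiv_fun_sum hF]

lemma Lop_mul (hB : B.transpose = B) (hf : ContDiffAt ℝ 2 f x) (hg : ContDiffAt ℝ 2 g x) :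
    Lop B (fun y => f y * g y) x = Lop B f x * g x + f x * Lop B g x
      + 2 * ∑ i, ∑ j, B i j * pd i f x * pd j g x := by
  have hsymm : ∑ i, ∑ j, B i j * (pd j f x * pd i g x) =
      ∑ i, ∑ j, B i j * (pd i f x * pd j g x) := by
    rw [Finset.sum_comm]
    refine Finset.sum_congr rfl fun i _ => Finset.sum_congr rfl fun j _ => ?_
    rw [← hB, Matrix.transpose_apply, hB]
  simp only [Lop, pd_pd_mul hf hg, mul_add, Finset.sum_add_distrib, hsymm, Finset.sum_mul,
    Finset.mul_sum, two_mul]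
  simp only [mul_assoc, mul_left_comm]
  ring

lemma pd_coord (i k : Fin n) : pd i (fun y : EuclideanSpace ℝ (Fin n) => y k) x =
    (1 : Matrix (Fin n) (Fin n) ℝ) i k := by
  have : HasFDerivAt (fun y : EuclideanSpace ℝ (Fin n) => y k)
      (EuclideanSpace.proj k : EuclideanSpace ℝ (Fin n) →L[ℝ] ℝ) x :=
    (EuclideanSpace.proj k : EuclideanSpace ℝ (Fin n) →L[ℝ] ℝ).hasFDerivAt
  rw [pd, this.fderiv]
  simp [Matrix.one_apply, eq_comm]

lemma contDiffAt_coord (k : Fin n) :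
    ContDiffAt ℝ 2 (fun y : EuclideanSpace ℝ (Fin n) => y k) x :=
  (EuclideanSpace.proj k : EuclideanSpace ℝ (Fin n) →L[ℝ] ℝ).contDiff.contDiffAt

lemma Lop_coord (k : Fin n) : Lop B (fun y : EuclideanSpace ℝ (Fin n) => y k) x = 0 := by
  have h : ∀ j : Fin n, pd j (fun y : EuclideanSpace ℝ (Fin n) => y k) =
      fun _ => (1 : Matrix (Fin n) (Fin n) ℝ) j k := fun j => funext fun y => pd_coord j k
  have h' : ∀ i (c : ℝ), pd i (fun _ : EuclideanSpace ℝ (Fin n) => c) x = 0 := by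
    intro j; simp [pd]
  simp [Lop, h, h']

/-- Second-order necessary condition at a maximum, tested against `B ≥ 0`. -/
lemma Lop_nonpos {B : Matrix (Fin n) (Fin n) ℝ} (hB : B.PosSemidef) (hf : ContDiffAt ℝ 2 f x)
    (hmax : IsLocalMax f x) : Lop B f x ≤ 0 := by
  have hdir : ∀ v : Fin n → ℝ, ∑ i, ∑ j, v i * v j * pd i (pd j f) x ≤ 0 := by
    intro v
    let V : EuclideanSpace ℝ (Fin n) := WithLp.toLp 2 v
    have hV : V = ∑ i, v i • EuclideanSpace.single i (1 : ℝ) := by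
      ext j; simp [V, Finset.sum_apply, Pi.single_apply]
    have happ : ∀ g : EuclideanSpace ℝ (Fin n) → ℝ, ∀ y, fderiv ℝ g y V = ∑ i, v i * pd i g y := by
      intro g y; rw [hV]; simp [pd]
    have hline : ∀ t : ℝ, HasDerivAt (fun t : ℝ => x + t • V) V t := by
      intro t
      simpa using ((hasDerivAt_id t).smul_const V).const_add x
    have hcont : Tendsto (fun t : ℝ => x + t • V) (𝓝 0) (𝓝 x) := by
      have := (hline 0).continuousAt.tendsto; simpa using this
    let G : ℝ → ℝ := fun t => f (x + t • V)
    have hG : ∀ᶠ t in 𝓝 (0 : ℝ), HasDerivAt G (∑ j, v j * pd j f (x + t • V)) t := by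
      filter_upwards [hcont.eventually (eventually_differentiableAt hf)] with t ht
      rw [← happ]
      exact ht.hasFDerivAt.comp_hasDerivAt t (hline t)
    have hdG : deriv G =ᶠ[𝓝 0] fun t => ∑ j, v j * pd j f (x + t • V) := by
      filter_upwards [hG] with t ht using ht.deriv
    have hddG : deriv (deriv G) 0 = ∑ i, ∑ j, v i * v j * pd i (pd j f) x := by
      rw [hdG.deriv_eq]
      have h2 : ∀ j, HasDerivAt (fun t : ℝ => pd j f (x + t • V)) (∑ i, v i * pd i (pd j f) x) 0 := by
        intro j
        rw [← happ]
        have hd : HasFDerivAt (pd j f) (fderiv ℝ (pd j f) x) (x + (0:ℝ) • V) := by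
          simpa using (differentiableAt_pd hf j).hasFDerivAt
        exact hd.comp_hasDerivAt (0:ℝ) (hline 0)
      have h3 := HasDerivAt.fun_sum (u := Finset.univ) fun j _ => (h2 j).const_mul (v j)
      rw [h3.deriv, Finset.sum_comm]
      simp only [Finset.mul_sum]
      refine Finset.sum_congr rfl fun i _ => Finset.sum_congr rfl fun j _ => ?_
      ring
    by_contra! hpos
    rw [← hddG] at hpos
    have hm : IsLocalMax G 0 := by
      have : ∀ᶠ t in 𝓝 (0:ℝ), f (x + t • V) ≤ f x := hcont.eventually hmax
      filter_upwards [this] with t ht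
      simpa [G] using ht
    have hmin : IsLocalMin G 0 :=
      isLocalMin_of_deriv_deriv_pos hpos hm.deriv_eq_zero hG.self_of_nhds.continuousAt
    have hc : G =ᶠ[𝓝 0] fun _ => G 0 := by
      filter_upwards [hm, hmin] with t h1 h2 using le_antisymm h1 h2
    have := hc.deriv.deriv_eq
    simp at this
    linarith
  obtain ⟨C, rfl⟩ := exists_transpose_mul_self hB
  have : Lop (C.transpose * C) f x = ∑ a, ∑ i, ∑ j, C a i * C a j * pd i (pd j f) x := by
    simp only [Lop, Matrix.mul_apply, Matrix.transpose_apply, Finset.sum_mul]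
    rw [Finset.sum_comm' (t' := Finset.univ) (s' := fun _ => Finset.univ) (by simp)]
    conv_rhs => rw [Finset.sum_comm]
    rw [Finset.sum_comm]
    refine Finset.sum_congr rfl fun i _ => ?_
    rw [Finset.sum_comm]
  rw [this]
  exact Finset.sum_nonpos fun a _ => hdir _

end Calculus

/-! ### Difference quotients -/

section DifferenceQuotients

open Filter Topology

variable {n : ℕ} {f : EuclideanSpace ℝ (Fin n) → ℝ} {x : EuclideanSpace ℝ (Fin n)}

/-- The forward difference quotient of `f` with step `h` in the coordinate direction `k`. -/
noncomputable def dq (h : ℝ) (k : Fin n) (f : EuclideanSpace ℝ (Fin n) → ℝ) :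
    EuclideanSpace ℝ (Fin n) → ℝ :=
  fun y => h⁻¹ * (f (y + h • EuclideanSpace.single k 1) + (-1) * f y)

lemma contDiffAt_shift {m : WithTop ℕ∞} {a : EuclideanSpace ℝ (Fin n)}
    (hf : ContDiffAt ℝ m f (x + a)) : ContDiffAt ℝ m (fun y => f (y + a)) x :=
  ContDiffAt.comp (f := fun y => y + a) x hf (contDiffAt_id.add contDiffAt_const)

lemma contDiffAt_dq {m : WithTop ℕ∞} {h : ℝ} {k : Fin n} (hf : ContDiffAt ℝ m f x)
    (hf' : ContDiffAt ℝ m f (x + h • EuclideanSpace.single k 1)) :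
    ContDiffAt ℝ m (dq h k f) x :=
  contDiffAt_const.mul ((contDiffAt_shift hf').add (contDiffAt_const.mul hf))

lemma pd_shift (a : EuclideanSpace ℝ (Fin n)) (i : Fin n) :
    pd i (fun y => f (y + a)) x = pd i f (x + a) := by
  simp only [pd, fderiv_comp_add_right]

lemma pd_dq {h : ℝ} {k : Fin n} (hf : DifferentiableAt ℝ f x)
    (hf' : DifferentiableAt ℝ f (x + h • EuclideanSpace.single k 1)) (i : Fin n) :
    pd i (dq h k f) x = dq h k (pd i f) x := by
  have h1 : DifferentiableAt ℝ (fun y => f (y + h • EuclideanSpace.single k 1)) x :=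
    (differentiableAt_comp_add_right _).2 hf'
  have h2 : DifferentiableAt ℝ (fun y => (-1) * f y) x := hf.const_mul _
  unfold dq
  rw [pd_const_mul _ (h1.fun_add h2), pd_add h1 h2, pd_const_mul _ hf, pd_shift]

lemma Lop_dq (B : Matrix (Fin n) (Fin n) ℝ) {h : ℝ} {k : Fin n} (hf : ContDiffAt ℝ 2 f x)
    (hf' : ContDiffAt ℝ 2 f (x + h • EuclideanSpace.single k 1)) :
    Lop B (dq h k f) x =
      h⁻¹ * (Lop B f (x + h • EuclideanSpace.single k 1) + (-1) * Lop B f x) := by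
  have h1 : ContDiffAt ℝ 2 (fun y => f (y + h • EuclideanSpace.single k 1)) x :=
    contDiffAt_shift hf'
  have h2 : ContDiffAt ℝ 2 (fun y => (-1) * f y) x := contDiffAt_const.mul hf
  have h3 : Lop B (fun y => f (y + h • EuclideanSpace.single k 1)) x =
      Lop B f (x + h • EuclideanSpace.single k 1) := by
    simp only [Lop]
    refine Finset.sum_congr rfl fun i _ => Finset.sum_congr rfl fun j _ => ?_
    rw [show pd j (fun y => f (y + h • EuclideanSpace.single k 1)) =
      fun y => pd j f (y + h • EuclideanSpace.single k 1) from funext fun y => pd_shift _ j,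
      pd_shift]
  unfold dq
  rw [Lop_const_mul _ _ (h1.add h2), Lop_add _ h1 h2, Lop_const_mul _ _ hf, h3]

/-- Difference quotients of a `C¹` function converge to the derivative even when the base point
moves along with the step; this is strict differentiability. -/
lemma tendsto_dq {y : EuclideanSpace ℝ (Fin n)} (hf : ContDiffAt ℝ 1 f y)
    {X : ℕ → EuclideanSpace ℝ (Fin n)} {h : ℕ → ℝ} (hX : Tendsto X atTop (𝓝 y))
    (hh : Tendsto h atTop (𝓝 0)) (hne : ∀ m, h m ≠ 0) (k : Fin n) :
    Tendsto (fun m => dq (h m) k f (X m)) atTop (𝓝 (pd k f y)) := by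
  have hs := (hf.hasStrictFDerivAt (by norm_num)).isLittleO
  have hX' : Tendsto (fun m => X m + h m • EuclideanSpace.single k (1 : ℝ)) atTop (𝓝 y) := by
    simpa using hX.add (hh.smul_const (EuclideanSpace.single k (1 : ℝ)))
  have h1 := hs.comp_tendsto (hX'.prodMk_nhds hX)
  have h2 : (fun m => f (X m + h m • EuclideanSpace.single k 1) - f (X m) - h m * pd k f y)
      =o[atTop] h := by
    refine (h1.congr_left ?_).trans_isBigO ?_
    · intro m; simp [pd]
    · refine Asymptotics.IsBigO.of_bound 1 (Eventually.of_forall fun m => ?_)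
      simp [norm_smul]
  have h3 := h2.tendsto_div_nhds_zero
  have h4 := h3.add_const (pd k f y)
  rw [zero_add] at h4
  refine h4.congr fun m => ?_
  have := hne m
  simp only [dq]
  field_simp
  ring

end DifferenceQuotients

/-! ### Consequences of the Monge-Ampère equation -/

section Equation

open Filter Topology

variable {n : ℕ} {u : EuclideanSpace ℝ (Fin n) → ℝ} {x : EuclideanSpace ℝ (Fin n)}
  {Ω : Set (EuclideanSpace ℝ (Fin n))}

lemma pd_pd_pd_left (hu : ContDiffAt ℝ 3 u x) (i j k : Fin n) :
    pd i (pd j (pd k u)) x = pd j (pd i (pd k u)) x :=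
  pd_comm (contDiffAt_pd hu (by norm_num) k) i j

lemma pd_pd_pd_right (hu : ContDiffAt ℝ 3 u x) (i j k : Fin n) :
    pd i (pd j (pd k u)) x = pd i (pd k (pd j u)) x := by
  refine pd_congr ?_ i
  filter_upwards [hu.eventually (by simp)] with y hy
  exact pd_comm (hy.of_le (by norm_num)) j k

lemma hess_transpose (hu : ContDiffAt ℝ 3 u x) : (hess u x).transpose = hess u x := by
  ext i j
  exact pd_comm (hu.of_le (by norm_num)) j i

lemma card_le_trace_inv_mul {A M : Matrix (Fin n) (Fin n) ℝ} (hA : A.PosDef) (hd : A.det = 1)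
    (hM : M.PosDef) (hdM : M.det = 1) : (n : ℝ) ≤ (A⁻¹ * M).trace := by
  obtain ⟨C, hC⟩ := exists_transpose_mul_self hA.inv.posSemidef
  have hdet : C.det * C.det = 1 := by
    have := congrArg Matrix.det hC
    rw [Matrix.det_nonsing_inv, hd, Matrix.det_mul, Matrix.det_transpose] at this
    simpa using this.symm
  have hCu : IsUnit C := by
    rw [Matrix.isUnit_iff_isUnit_det]
    exact IsUnit.of_mul_eq_one _ hdet
  have hP : (C * M * C.transpose).PosDef := by
    have := hM.mul_mul_conjTranspose_same (B := C) (Matrix.vecMul_injective_iff_isUnit.2 hCu)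
    rwa [Matrix.conjTranspose_eq_transpose_of_trivial] at this
  have := card_le_trace hP (by
    rw [Matrix.det_mul, Matrix.det_mul, Matrix.det_transpose, hdM, mul_one, hdet])
  rw [hC, Matrix.mul_assoc, Matrix.trace_mul_comm]
  exact this

/-- The linearized Monge-Ampère operator annihilates the first derivatives. By the
arithmetic-geometric mean inequality, `y ↦ tr ((D²u x)⁻¹ D²u y)` is minimal at `y = x`, so its
derivative vanishes there. -/
lemma Lop_pd_eq_zero (hΩ : IsOpen Ω) (hu : ContDiffAt ℝ 3 u x) (hx : x ∈ Ω)
    (hpos : ∀ x ∈ Ω, (hess u x).PosDef) (hMA : ∀ x ∈ Ω, (hess u x).det = 1) (k : Fin n) :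
    Lop (hess u x)⁻¹ (pd k u) x = 0 := by
  set B := (hess u x)⁻¹ with hBdef
  have hmin : IsLocalMin (fun y => ∑ i, ∑ j, B i j * pd j (pd i u) y) x := by
    filter_upwards [hΩ.mem_nhds hx] with y hy
    have e : ∀ y, ∑ i, ∑ j, B i j * pd j (pd i u) y = (B * hess u y).trace := by
      intro y; simp [Matrix.trace, Matrix.mul_apply, hess]
    rw [e, e, hBdef, Matrix.nonsing_inv_mul _ (by rw [hMA x hx]; exact isUnit_one),
      Matrix.trace_one, Fintype.card_fin]
    exact card_le_trace_inv_mul (hpos x hx) (hMA x hx) (hpos y hy) (hMA y hy)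
  have hd : ∀ i j : Fin n, DifferentiableAt ℝ (pd j (pd i u)) x := fun i j =>
    differentiableAt_pd (contDiffAt_pd hu (by norm_num) i) j
  have h0 : pd k (fun y => ∑ i, ∑ j, B i j * pd j (pd i u) y) x = 0 := by
    rw [pd, hmin.fderiv_eq_zero]; rfl
  rw [pd_sum Finset.univ (fun i y => ∑ j, B i j * pd j (pd i u) y)
    (fun i _ => DifferentiableAt.fun_sum fun j _ => (hd i j).const_mul _)] at h0
  rw [← h0, Lop]
  refine Finset.sum_congr rfl fun i _ => ?_
  rw [pd_sum Finset.univ (fun j y => B i j * pd j (pd i u) y)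
    (fun j _ => (hd i j).const_mul _)]
  refine Finset.sum_congr rfl fun j _ => ?_
  rw [pd_const_mul _ (hd i j), pd_pd_pd_right hu k j i, pd_pd_pd_left hu k i j,
    pd_pd_pd_right hu i k j]

/-- The matrix `∂ₗ D²u`. -/
noncomputable def T3 (u : EuclideanSpace ℝ (Fin n) → ℝ) (l : Fin n)
    (x : EuclideanSpace ℝ (Fin n)) : Matrix (Fin n) (Fin n) ℝ :=
  Matrix.of fun i j => pd l (pd i (pd j u)) x

/-- The difference quotient of the matrix function `D²u` in the direction `k`. -/
noncomputable def dqHess (u : EuclideanSpace ℝ (Fin n) → ℝ) (h : ℝ) (k : Fin n)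
    (x : EuclideanSpace ℝ (Fin n)) : Matrix (Fin n) (Fin n) ℝ :=
  Matrix.of fun i j => dq h k (pd i (pd j u)) x

lemma T3_transpose (hu : ContDiffAt ℝ 3 u x) (l : Fin n) : (T3 u l x).transpose = T3 u l x := by
  ext i j
  exact pd_pd_pd_right hu l j i

lemma Lop_eq_trace_T3 (hu : ContDiffAt ℝ 3 u x) (B : Matrix (Fin n) (Fin n) ℝ) (l : Fin n) :
    Lop B (pd l u) x = (B * T3 u l x).trace := by
  simp only [Lop, Matrix.trace, Matrix.diag_apply, Matrix.mul_apply, T3, Matrix.of_apply]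
  refine Finset.sum_congr rfl fun i _ => Finset.sum_congr rfl fun j _ => ?_
  rw [pd_pd_pd_right hu l j i, pd_pd_pd_left hu l i j, pd_pd_pd_right hu i l j]

/-- The third derivatives of `u` suffice to apply the linearized operator to a difference quotient
of `u_l`: the equation at the two base points turns the difference of third derivatives into a
difference of the inverse Hessians. -/
lemma Lop_dq_pd (hΩ : IsOpen Ω) (hu : ContDiffOn ℝ 3 u Ω)
    (hpos : ∀ x ∈ Ω, (hess u x).PosDef) (hMA : ∀ x ∈ Ω, (hess u x).det = 1)
    {h : ℝ} {k l : Fin n} (hx : x ∈ Ω) (hy : x + h • EuclideanSpace.single k 1 ∈ Ω) :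
    Lop (hess u x)⁻¹ (dq h k (pd l u)) x =
      ((hess u x)⁻¹ * dqHess u h k x * (hess u (x + h • EuclideanSpace.single k 1))⁻¹ *
        T3 u l (x + h • EuclideanSpace.single k 1)).trace := by
  have hux := hu.contDiffAt (hΩ.mem_nhds hx)
  have huy := hu.contDiffAt (hΩ.mem_nhds hy)
  rw [Lop_dq _ (contDiffAt_pd hux (by norm_num) l) (contDiffAt_pd huy (by norm_num) l),
    Lop_pd_eq_zero hΩ hux hx hpos hMA]
  have h0 := Lop_pd_eq_zero hΩ huy hy hpos hMA l
  rw [Lop_eq_trace_T3 huy] at h0 ⊢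
  have hD : dqHess u h k x =
      h⁻¹ • (hess u (x + h • EuclideanSpace.single k 1) - hess u x) := by
    ext i j; simp [dqHess, dq, hess, sub_eq_add_neg]
  set y := x + h • EuclideanSpace.single k (1 : ℝ)
  have hinv : (hess u x)⁻¹ * (hess u y - hess u x) * (hess u y)⁻¹ =
      (hess u x)⁻¹ - (hess u y)⁻¹ := by
    rw [Matrix.mul_sub, Matrix.sub_mul, Matrix.nonsing_inv_mul _ (by rw [hMA x hx]; exact isUnit_one),
      Matrix.mul_assoc, Matrix.mul_nonsing_inv _ (by rw [hMA y hy]; exact isUnit_one)]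
    simp
  rw [hD, Matrix.mul_smul, Matrix.smul_mul, Matrix.smul_mul, hinv, Matrix.trace_smul,
    Matrix.sub_mul, Matrix.trace_sub, h0]
  simp

end Equation

/-! ### The regularized function -/

section Approximation

open Filter Topology

variable {n : ℕ} {u : EuclideanSpace ℝ (Fin n) → ℝ} {x : EuclideanSpace ℝ (Fin n)}
  {Ω : Set (EuclideanSpace ℝ (Fin n))}

/-- The `C²` approximation of `b^{kl}` in which each `u_{kl}` is replaced by the difference
quotient of `u_l` in the direction `k`. -/
noncomputable def beta (u : EuclideanSpace ℝ (Fin n) → ℝ) (h : ℝ) (k l : Fin n)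
    (x : EuclideanSpace ℝ (Fin n)) : ℝ :=
  (1 : Matrix (Fin n) (Fin n) ℝ) k l * (∑ m, dq h m (pd m u) x) + (-1) * dq h k (pd l u) x

/-- The quadratic perturbation `δ/2 |x|² + δ ⟨c, x⟩`. -/
noncomputable def quad (δ : ℝ) (c x : EuclideanSpace ℝ (Fin n)) : ℝ :=
  ∑ i, (δ / 2 * (x i * x i) + δ * c i * x i)

/-- The `C²` approximation of `ψ`, with a quadratic perturbation. -/
noncomputable def Phi (u : EuclideanSpace ℝ (Fin n) → ℝ) (δ : ℝ) (c : EuclideanSpace ℝ (Fin n))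
    (h : ℝ) (x : EuclideanSpace ℝ (Fin n)) : ℝ :=
  (∑ k, ∑ l, beta u h k l x * (pd k u x * pd l u x)) + (-(2 * ((n : ℝ) - 1))) * u x + quad δ c x

lemma contDiffAt_beta {h : ℝ} (hx : ContDiffAt ℝ 3 u x)
    (hs : ∀ k, ContDiffAt ℝ 3 u (x + h • EuclideanSpace.single k 1)) (k l : Fin n) :
    ContDiffAt ℝ 2 (beta u h k l) x := by
  have hw : ∀ k l, ContDiffAt ℝ 2 (dq h k (pd l u)) x := fun k l =>
    contDiffAt_dq (contDiffAt_pd hx (by norm_num) l) (contDiffAt_pd (hs k) (by norm_num) l)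
  exact (contDiffAt_const.mul (ContDiffAt.sum fun m _ => hw m m)).add
    (contDiffAt_const.mul (hw k l))

lemma contDiffAt_quad_term (δ : ℝ) (c : EuclideanSpace ℝ (Fin n)) (i : Fin n) :
    ContDiffAt ℝ 2 (fun y : EuclideanSpace ℝ (Fin n) => δ / 2 * (y i * y i) + δ * c i * y i) x :=
  (contDiffAt_const.mul ((contDiffAt_coord i).mul (contDiffAt_coord i))).add
    (contDiffAt_const.mul (contDiffAt_coord i))

lemma contDiffAt_quad (δ : ℝ) (c : EuclideanSpace ℝ (Fin n)) : ContDiffAt ℝ 2 (quad δ c) x :=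
  ContDiffAt.sum fun i _ => contDiffAt_quad_term δ c i

lemma contDiffAt_Phi_term {h : ℝ} (hx : ContDiffAt ℝ 3 u x)
    (hs : ∀ k, ContDiffAt ℝ 3 u (x + h • EuclideanSpace.single k 1)) (k l : Fin n) :
    ContDiffAt ℝ 2 (fun y => beta u h k l y * (pd k u y * pd l u y)) x :=
  (contDiffAt_beta hx hs k l).mul
    ((contDiffAt_pd hx (by norm_num) k).mul (contDiffAt_pd hx (by norm_num) l))

lemma contDiffAt_Phi {h : ℝ} (hx : ContDiffAt ℝ 3 u x)
    (hs : ∀ k, ContDiffAt ℝ 3 u (x + h • EuclideanSpace.single k 1)) (δ : ℝ)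
    (c : EuclideanSpace ℝ (Fin n)) : ContDiffAt ℝ 2 (Phi u δ c h) x :=
  ((ContDiffAt.sum fun k _ => ContDiffAt.sum fun l _ => contDiffAt_Phi_term hx hs k l).add
    (contDiffAt_const.mul (hx.of_le (by norm_num)))).add (contDiffAt_quad δ c)

lemma Lop_quad (B : Matrix (Fin n) (Fin n) ℝ) (hB : B.transpose = B) (δ : ℝ)
    (c : EuclideanSpace ℝ (Fin n)) : Lop B (quad δ c) x = δ * B.trace := by
  unfold quad
  rw [Lop_sum B Finset.univ _ fun i _ => contDiffAt_quad_term δ c i, Matrix.trace, Finset.mul_sum]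
  refine Finset.sum_congr rfl fun i _ => ?_
  rw [Lop_add B (contDiffAt_const.mul ((contDiffAt_coord i).mul (contDiffAt_coord i)))
    (contDiffAt_const.mul (contDiffAt_coord i)),
    Lop_const_mul B _ ((contDiffAt_coord i).mul (contDiffAt_coord i)),
    Lop_const_mul B _ (contDiffAt_coord i), Lop_coord,
    Lop_mul B hB (contDiffAt_coord i) (contDiffAt_coord i), Lop_coord]
  simp only [pd_coord]
  simp [Matrix.one_apply]
  ring

/-- The value of `L` on the difference quotient of `u_l` in the direction `k`, as given by
`Lop_dq_pd`. -/
noncomputable def LW (u : EuclideanSpace ℝ (Fin n) → ℝ) (h : ℝ) (k l : Fin n)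
    (x : EuclideanSpace ℝ (Fin n)) : ℝ :=
  ((hess u x)⁻¹ * dqHess u h k x * (hess u (x + h • EuclideanSpace.single k 1))⁻¹ *
    T3 u l (x + h • EuclideanSpace.single k 1)).trace

/-- The partial derivative `∂ᵢ` of `beta u h k l`. -/
noncomputable def dbeta (u : EuclideanSpace ℝ (Fin n) → ℝ) (h : ℝ) (k l i : Fin n)
    (x : EuclideanSpace ℝ (Fin n)) : ℝ :=
  (1 : Matrix (Fin n) (Fin n) ℝ) k l * (∑ m, dq h m (pd i (pd m u)) x)
    + (-1) * dq h k (pd i (pd l u)) x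

lemma pd_beta {h : ℝ} (hx : ContDiffAt ℝ 3 u x)
    (hs : ∀ k, ContDiffAt ℝ 3 u (x + h • EuclideanSpace.single k 1)) (k l i : Fin n) :
    pd i (beta u h k l) x = dbeta u h k l i x := by
  have hw : ∀ k l, DifferentiableAt ℝ (dq h k (pd l u)) x := fun k l =>
    (contDiffAt_dq (m := 2) (contDiffAt_pd hx (by norm_num) l)
      (contDiffAt_pd (hs k) (by norm_num) l)).differentiableAt (by norm_num)
  have hsum : DifferentiableAt ℝ (fun y => ∑ m, dq h m (pd m u) y) x :=
    DifferentiableAt.fun_sum fun m _ => hw m m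
  have hd : ∀ k l, pd i (dq h k (pd l u)) x = dq h k (pd i (pd l u)) x := fun k l =>
    pd_dq ((contDiffAt_pd (m := 2) hx (by norm_num) l).differentiableAt (by norm_num))
      ((contDiffAt_pd (m := 2) (hs k) (by norm_num) l).differentiableAt (by norm_num)) i
  unfold beta
  rw [pd_add (hsum.const_mul _) ((hw k l).const_mul _), pd_const_mul _ hsum,
    pd_const_mul _ (hw k l), pd_sum Finset.univ (fun m => dq h m (pd m u)) fun m _ => hw m m]
  simp only [hd, dbeta]

lemma Lop_beta (hΩ : IsOpen Ω) (hu : ContDiffOn ℝ 3 u Ω)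
    (hpos : ∀ x ∈ Ω, (hess u x).PosDef) (hMA : ∀ x ∈ Ω, (hess u x).det = 1)
    {h : ℝ} (hx : x ∈ Ω) (hs : ∀ k, x + h • EuclideanSpace.single k 1 ∈ Ω) (k l : Fin n) :
    Lop (hess u x)⁻¹ (beta u h k l) x =
      (1 : Matrix (Fin n) (Fin n) ℝ) k l * (∑ m, LW u h m m x) + (-1) * LW u h k l x := by
  have hx' := hu.contDiffAt (hΩ.mem_nhds hx)
  have hs' := fun k => hu.contDiffAt (hΩ.mem_nhds (hs k))
  have hw : ∀ k l, ContDiffAt ℝ 2 (dq h k (pd l u)) x := fun k l =>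
    contDiffAt_dq (contDiffAt_pd hx' (by norm_num) l) (contDiffAt_pd (hs' k) (by norm_num) l)
  have hsum : ContDiffAt ℝ 2 (fun y => ∑ m, dq h m (pd m u) y) x :=
    ContDiffAt.sum fun m _ => hw m m
  unfold beta
  rw [Lop_add _ (contDiffAt_const.mul hsum) (contDiffAt_const.mul (hw k l)),
    Lop_const_mul _ _ hsum, Lop_const_mul _ _ (hw k l),
    Lop_sum _ Finset.univ (fun m => dq h m (pd m u)) fun m _ => hw m m]
  simp only [Lop_dq_pd hΩ hu hpos hMA hx (hs _), LW]

/-- The product rule, `L u_k = 0` and `L u = n` express `L Phi` at `x`, where `L` has the coefficients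
`(D²u(x))⁻¹`, through derivatives of `u` of order at most three. -/
lemma Lop_Phi (hΩ : IsOpen Ω) (hu : ContDiffOn ℝ 3 u Ω)
    (hpos : ∀ x ∈ Ω, (hess u x).PosDef) (hMA : ∀ x ∈ Ω, (hess u x).det = 1)
    {h : ℝ} (hx : x ∈ Ω) (hs : ∀ k, x + h • EuclideanSpace.single k 1 ∈ Ω) (δ : ℝ)
    (c : EuclideanSpace ℝ (Fin n)) :
    Lop (hess u x)⁻¹ (Phi u δ c h) x =
      (∑ k, ∑ l, (((1 : Matrix (Fin n) (Fin n) ℝ) k l * (∑ m, LW u h m m x)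
          + (-1) * LW u h k l x) * (pd k u x * pd l u x)
        + beta u h k l x * (2 * hess u x k l)
        + 2 * (dbeta u h k l k x * pd l u x + dbeta u h k l l x * pd k u x)))
      + (-(2 * ((n : ℝ) - 1))) * n + δ * (hess u x)⁻¹.trace := by
  have hx' := hu.contDiffAt (hΩ.mem_nhds hx)
  have hs' := fun k => hu.contDiffAt (hΩ.mem_nhds (hs k))
  have hp : ∀ k, ContDiffAt ℝ 2 (pd k u) x := fun k => contDiffAt_pd hx' (by norm_num) k
  have hunit : IsUnit (hess u x).det := by rw [hMA x hx]; exact isUnit_one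
  have hLp : ∀ k, Lop (hess u x)⁻¹ (pd k u) x = 0 := Lop_pd_eq_zero hΩ hx' hx hpos hMA
  have hLb := Lop_beta hΩ hu hpos hMA hx hs
  have hBt : ((hess u x)⁻¹).transpose = (hess u x)⁻¹ := by
    rw [Matrix.transpose_nonsing_inv, hess_transpose hx']
  have hBA : ∀ i k, ∑ j, (hess u x)⁻¹ i j * pd j (pd k u) x =
      (1 : Matrix (Fin n) (Fin n) ℝ) i k := by
    intro i k
    rw [← Matrix.nonsing_inv_mul _ hunit, Matrix.mul_apply]
    rfl
  have hcontr : ∀ (w : Fin n → ℝ) k,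
      ∑ i, ∑ j, (hess u x)⁻¹ i j * w i * pd j (pd k u) x = w k := by
    intro w k
    have : ∀ i, ∑ j, (hess u x)⁻¹ i j * w i * pd j (pd k u) x =
        w i * (1 : Matrix (Fin n) (Fin n) ℝ) i k := by
      intro i
      rw [← hBA, Finset.mul_sum]
      exact Finset.sum_congr rfl fun j _ => by ring
    simp [this, Matrix.one_apply]
  have hLu : Lop (hess u x)⁻¹ u x = n := by
    have : Lop (hess u x)⁻¹ u x = ∑ i, (1 : Matrix (Fin n) (Fin n) ℝ) i i := by
      simp only [Lop, ← hBA]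
      refine Finset.sum_congr rfl fun i _ => Finset.sum_congr rfl fun j _ => ?_
      rw [pd_comm (hx'.of_le (by norm_num)) i j]
    rw [this]; simp
  have hterm : ∀ k l, Lop (hess u x)⁻¹ (fun y => beta u h k l y * (pd k u y * pd l u y)) x =
      ((1 : Matrix (Fin n) (Fin n) ℝ) k l * (∑ m, LW u h m m x)
          + (-1) * LW u h k l x) * (pd k u x * pd l u x)
        + beta u h k l x * (2 * hess u x k l)
        + 2 * (dbeta u h k l k x * pd l u x + dbeta u h k l l x * pd k u x) := by
    intro k l
    rw [Lop_mul _ hBt (contDiffAt_beta hx' hs' k l) ((hp k).mul (hp l)), hLb,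
      Lop_mul _ hBt (hp k) (hp l), hLp, hLp, hcontr (fun i => pd i (pd k u) x) l]
    have h1 : ∑ i, ∑ j, (hess u x)⁻¹ i j * pd i (beta u h k l) x *
        pd j (fun y => pd k u y * pd l u y) x =
        dbeta u h k l k x * pd l u x + dbeta u h k l l x * pd k u x := by
      simp only [pd_mul ((hp k).differentiableAt (by norm_num))
        ((hp l).differentiableAt (by norm_num)), pd_beta hx' hs']
      rw [← hcontr (fun i => dbeta u h k l i x) k, ← hcontr (fun i => dbeta u h k l i x) l]
      simp only [Finset.sum_mul, ← Finset.sum_add_distrib]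
      refine Finset.sum_congr rfl fun i _ => Finset.sum_congr rfl fun j _ => ?_
      ring
    rw [h1, show pd l (pd k u) x = hess u x k l from pd_comm (hx'.of_le (by norm_num)) l k]
    ring
  have hT := contDiffAt_Phi_term hx' hs'
  unfold Phi
  rw [Lop_add _ ((ContDiffAt.sum fun k _ => ContDiffAt.sum fun l _ => hT k l).add
      (contDiffAt_const.mul (hx'.of_le (by norm_num)))) (contDiffAt_quad δ c),
    Lop_add _ (ContDiffAt.sum fun k _ => ContDiffAt.sum fun l _ => hT k l)
      (contDiffAt_const.mul (hx'.of_le (by norm_num))),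
    Lop_const_mul _ _ (hx'.of_le (by norm_num)), Lop_quad _ hBt, hLu,
    Lop_sum _ Finset.univ (fun k y => ∑ l, beta u h k l y * (pd k u y * pd l u y))
      (fun k _ => ContDiffAt.sum fun l _ => hT k l)]
  congr 2
  refine Finset.sum_congr rfl fun k _ => ?_
  rw [Lop_sum _ Finset.univ (fun l y => beta u h k l y * (pd k u y * pd l u y))
    (fun l _ => hT k l)]
  exact Finset.sum_congr rfl fun l _ => hterm k l

end Approximation

/-! ### Passage to the limit -/

section Limit

open Filter Topology

variable {n : ℕ} {u : EuclideanSpace ℝ (Fin n) → ℝ} {y : EuclideanSpace ℝ (Fin n)}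
  {Ω : Set (EuclideanSpace ℝ (Fin n))} {X : ℕ → EuclideanSpace ℝ (Fin n)} {h : ℕ → ℝ}

lemma tendsto_beta (hu : ContDiffAt ℝ 3 u y) (hX : Tendsto X atTop (𝓝 y))
    (hh : Tendsto h atTop (𝓝 0)) (hne : ∀ m, h m ≠ 0) (k l : Fin n) :
    Tendsto (fun m => beta u (h m) k l (X m)) atTop (𝓝 (bMat u y k l)) := by
  have hd : ∀ k l, Tendsto (fun m => dq (h m) k (pd l u) (X m)) atTop (𝓝 (pd k (pd l u) y)) :=
    fun k l => tendsto_dq (contDiffAt_pd hu (by norm_num) l) hX hh hne k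
  have := ((tendsto_finsetSum Finset.univ fun m _ => hd m m).const_mul
    ((1 : Matrix (Fin n) (Fin n) ℝ) k l)).add ((hd k l).const_mul (-1))
  have e : bMat u y k l = (1 : Matrix (Fin n) (Fin n) ℝ) k l * (∑ m, pd m (pd m u) y)
      + (-1) * pd k (pd l u) y := by
    simp [bMat, hess, Matrix.trace]
    ring
  rw [e]
  exact this

lemma tendsto_Phi (hu : ContDiffAt ℝ 3 u y) (hX : Tendsto X atTop (𝓝 y))
    (hh : Tendsto h atTop (𝓝 0)) (hne : ∀ m, h m ≠ 0) (δ : ℝ) (c : EuclideanSpace ℝ (Fin n)) :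
    Tendsto (fun m => Phi u δ c (h m) (X m)) atTop (𝓝 (psiFn u y + quad δ c y)) := by
  have hp : ∀ k, Tendsto (fun m => pd k u (X m)) atTop (𝓝 (pd k u y)) := fun k =>
    (contDiffAt_pd (m := 2) hu (by norm_num) k).continuousAt.tendsto.comp hX
  have hb := tendsto_beta hu hX hh hne
  have hq := (contDiffAt_quad (x := y) δ c).continuousAt.tendsto.comp hX
  have hU := hu.continuousAt.tendsto.comp hX
  have := ((tendsto_finsetSum Finset.univ fun k _ => tendsto_finsetSum Finset.univ fun l _ =>
    (hb k l).mul ((hp k).mul (hp l))).add (hU.const_mul (-(2 * ((n : ℝ) - 1))))).add hq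
  have e : psiFn u y + quad δ c y = (∑ k, ∑ l, bMat u y k l * (pd k u y * pd l u y))
      + (-(2 * ((n : ℝ) - 1))) * u y + quad δ c y := by
    simp only [psiFn, mul_assoc]
    ring
  rw [e]
  exact this

lemma continuousAt_hess (hu : ContDiffAt ℝ 3 u y) : ContinuousAt (hess u) y := by
  refine continuousAt_pi.2 fun i => continuousAt_pi.2 fun j => ?_
  exact (contDiffAt_pd (m := 1) (contDiffAt_pd (m := 2) hu (by norm_num) j)
    (by norm_num) i).continuousAt

lemma continuousAt_T3 (hu : ContDiffAt ℝ 3 u y) (l : Fin n) : ContinuousAt (T3 u l) y := by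
  refine continuousAt_pi.2 fun i => continuousAt_pi.2 fun j => ?_
  exact (contDiffAt_pd (m := 0) (contDiffAt_pd (m := 1) (contDiffAt_pd (m := 2) hu
    (by norm_num) j) (by norm_num) i) (by norm_num) l).continuousAt

lemma tendsto_hess_inv (hu : ContDiffAt ℝ 3 u y) (hMA : (hess u y).det = 1)
    (hX : Tendsto X atTop (𝓝 y)) :
    Tendsto (fun m => (hess u (X m))⁻¹) atTop (𝓝 (hess u y)⁻¹) := by
  have h1 : ContinuousAt (fun A : Matrix (Fin n) (Fin n) ℝ => A⁻¹) (hess u y) := by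
    refine continuousAt_matrix_inv _ ?_
    rw [hMA]
    simp
  exact h1.tendsto.comp ((continuousAt_hess hu).tendsto.comp hX)

lemma tendsto_LW (hu : ContDiffAt ℝ 3 u y) (hMA : (hess u y).det = 1)
    (hX : Tendsto X atTop (𝓝 y)) (hh : Tendsto h atTop (𝓝 0)) (hne : ∀ m, h m ≠ 0)
    (k l : Fin n) :
    Tendsto (fun m => LW u (h m) k l (X m)) atTop
      (𝓝 ((hess u y)⁻¹ * T3 u k y * (hess u y)⁻¹ * T3 u l y).trace) := by
  have hX' : Tendsto (fun m => X m + h m • EuclideanSpace.single k (1 : ℝ)) atTop (𝓝 y) := by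
    simpa using hX.add (hh.smul_const (EuclideanSpace.single k (1 : ℝ)))
  have hD : Tendsto (fun m => dqHess u (h m) k (X m)) atTop (𝓝 (T3 u k y)) := by
    refine tendsto_pi_nhds.2 fun i => tendsto_pi_nhds.2 fun j => ?_
    exact tendsto_dq (contDiffAt_pd (contDiffAt_pd (m := 2) hu (by norm_num) j)
      (by norm_num) i) hX hh hne k
  have h1 := (((tendsto_hess_inv hu hMA hX).mul hD).mul (tendsto_hess_inv hu hMA hX')).mul
    ((continuousAt_T3 hu l).tendsto.comp hX')
  exact ((continuous_id.matrix_trace).tendsto _).comp h1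

lemma tendsto_dbeta (hu : ContDiffAt ℝ 3 u y) (hX : Tendsto X atTop (𝓝 y))
    (hh : Tendsto h atTop (𝓝 0)) (hne : ∀ m, h m ≠ 0) (k l i : Fin n) :
    Tendsto (fun m => dbeta u (h m) k l i (X m)) atTop
      (𝓝 ((1 : Matrix (Fin n) (Fin n) ℝ) k l * (∑ m, pd m (pd i (pd m u)) y)
        + (-1) * pd k (pd i (pd l u)) y)) := by
  have hd : ∀ k l, Tendsto (fun m => dq (h m) k (pd i (pd l u)) (X m)) atTop
      (𝓝 (pd k (pd i (pd l u)) y)) :=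
    fun k l => tendsto_dq (contDiffAt_pd (contDiffAt_pd (m := 2) hu (by norm_num) l)
      (by norm_num) i) hX hh hne k
  exact ((tendsto_finsetSum Finset.univ fun m _ => hd m m).const_mul
    ((1 : Matrix (Fin n) (Fin n) ℝ) k l)).add ((hd k l).const_mul (-1))

/-- The formal value of `L(ψ + q)`, where `L q = δ tr (D²u)⁻¹`, is positive. The terms are
a Gram-matrix term (nonnegative by Cauchy-Schwarz), `4 σ₂(D²u) - 2n(n-1)` (nonnegative by
Maclaurin's inequality), and terms containing `∑ₖ ∂ₖ b^{kl}`, which vanish. -/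
lemma limit_pos (hn : 2 ≤ n) (hu : ContDiffAt ℝ 3 u y) (hpos : (hess u y).PosDef)
    (hMA : (hess u y).det = 1) {δ : ℝ} (hδ : 0 < δ) :
    0 < (∑ k, ∑ l, (((1 : Matrix (Fin n) (Fin n) ℝ) k l *
          (∑ m, ((hess u y)⁻¹ * T3 u m y * (hess u y)⁻¹ * T3 u m y).trace)
          + (-1) * ((hess u y)⁻¹ * T3 u k y * (hess u y)⁻¹ * T3 u l y).trace)
            * (pd k u y * pd l u y)
        + bMat u y k l * (2 * hess u y k l)
        + 2 * (((1 : Matrix (Fin n) (Fin n) ℝ) k l * (∑ m, pd m (pd k (pd m u)) y)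
            + (-1) * pd k (pd k (pd l u)) y) * pd l u y
          + ((1 : Matrix (Fin n) (Fin n) ℝ) k l * (∑ m, pd m (pd l (pd m u)) y)
            + (-1) * pd k (pd l (pd l u)) y) * pd k u y)))
      + (-(2 * ((n : ℝ) - 1))) * n + δ * (hess u y)⁻¹.trace := by
  have hgram := gram_nonneg hpos.inv.posSemidef (fun k => T3 u k y) (T3_transpose hu)
    (fun k => pd k u y)
  have hsig := sigma_two_ge hpos hMA
  have htr : 0 < (hess u y)⁻¹.trace := by
    have : Nonempty (Fin n) := ⟨⟨0, by omega⟩⟩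
    exact hpos.inv.trace_pos
  have hdiv1 : ∑ k, ∑ l, ((1 : Matrix (Fin n) (Fin n) ℝ) k l * (∑ m, pd m (pd k (pd m u)) y)
      + (-1) * pd k (pd k (pd l u)) y) * pd l u y = 0 := by
    rw [Finset.sum_comm]
    refine Finset.sum_eq_zero fun l _ => ?_
    rw [← Finset.sum_mul, Finset.sum_add_distrib]
    simp only [Matrix.one_apply, ite_mul, one_mul, zero_mul, Finset.sum_ite_eq', Finset.mem_univ,
      if_true]
    rw [← Finset.sum_add_distrib, Finset.sum_eq_zero, zero_mul]
    intro m _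
    rw [pd_pd_pd_right hu m l m]; ring
  have hdiv2 : ∑ k, ∑ l, ((1 : Matrix (Fin n) (Fin n) ℝ) k l * (∑ m, pd m (pd l (pd m u)) y)
      + (-1) * pd k (pd l (pd l u)) y) * pd k u y = 0 := by
    refine Finset.sum_eq_zero fun k _ => ?_
    rw [← Finset.sum_mul, Finset.sum_add_distrib]
    simp only [Matrix.one_apply, ite_mul, one_mul, zero_mul, Finset.sum_ite_eq, Finset.mem_univ,
      if_true]
    rw [← Finset.sum_add_distrib, Finset.sum_eq_zero, zero_mul]
    intro m _
    rw [pd_pd_pd_left hu m k m]; ring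
  have hb : ∑ k, ∑ l, bMat u y k l * (2 * hess u y k l) =
      2 * ((hess u y).trace ^ 2 - (hess u y * hess u y).trace) := by
    have h1 : (hess u y * hess u y).trace = ∑ k, ∑ l, hess u y k l * hess u y k l := by
      nth_rewrite 2 [← hess_transpose hu]
      simp [Matrix.trace, Matrix.mul_apply]
    have h2 : ∀ k, ∑ l, bMat u y k l * (2 * hess u y k l) =
        2 * (hess u y).trace * hess u y k k - 2 * ∑ l, hess u y k l * hess u y k l := by
      intro k
      simp only [bMat, Matrix.sub_apply, Matrix.smul_apply, smul_eq_mul, sub_mul,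
        Finset.sum_sub_distrib, Finset.mul_sum]
      congr 1
      · simp [Matrix.one_apply]; ring
      · exact Finset.sum_congr rfl fun l _ => by ring
    simp only [h2, Finset.sum_sub_distrib, ← Finset.mul_sum, h1]
    rw [show ∑ i, hess u y i i = (hess u y).trace from rfl]
    ring
  have hg : ∑ k, ∑ l, ((1 : Matrix (Fin n) (Fin n) ℝ) k l *
          (∑ m, ((hess u y)⁻¹ * T3 u m y * (hess u y)⁻¹ * T3 u m y).trace)
          + (-1) * ((hess u y)⁻¹ * T3 u k y * (hess u y)⁻¹ * T3 u l y).trace)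
            * (pd k u y * pd l u y) =
      ∑ k, ∑ l, ((∑ m, ((hess u y)⁻¹ * T3 u m y * (hess u y)⁻¹ * T3 u m y).trace) *
        (1 : Matrix (Fin n) (Fin n) ℝ) k l
          - ((hess u y)⁻¹ * T3 u k y * (hess u y)⁻¹ * T3 u l y).trace)
            * pd k u y * pd l u y :=
    Finset.sum_congr rfl fun k _ => Finset.sum_congr rfl fun l _ => by ring
  simp only [Finset.sum_add_distrib (s := Finset.univ), ← Finset.mul_sum] at hdiv1 hdiv2 hb hg ⊢
  simp only [add_mul, mul_add, Finset.sum_add_distrib (s := Finset.univ)]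
    at hdiv1 hdiv2 hb hg hgram ⊢
  have := mul_pos hδ htr
  nlinarith

/-- A strict maximum point `y ∈ Ω` of `ψ + quad δ c` is impossible. Maximizers of the `C²`
approximations `Phi` on a small ball converge to `y`, the second-order condition
`L Phi ≤ 0` holds at them, and it passes to the limit, contradicting `limit_pos`. -/
lemma no_strict_max (hn : 2 ≤ n) (hΩ : IsOpen Ω) (hu : ContDiffOn ℝ 3 u Ω)
    (hpos : ∀ x ∈ Ω, (hess u x).PosDef) (hMA : ∀ x ∈ Ω, (hess u x).det = 1)
    {δ : ℝ} (hδ : 0 < δ) (c : EuclideanSpace ℝ (Fin n)) (hy : y ∈ Ω)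
    (hstrict : ∀ z ∈ Ω, z ≠ y → psiFn u z + quad δ c z < psiFn u y + quad δ c y) : False := by
  obtain ⟨R, hR, hball⟩ := Metric.isOpen_iff.1 hΩ y hy
  set r := R / 3 with hr
  have hr0 : 0 < r := by positivity
  set h0 : ℕ → ℝ := fun m => r / ((m : ℝ) + 1) with hh0
  have hh0pos : ∀ m, 0 < h0 m := fun m => by positivity
  have hh0le : ∀ m, h0 m ≤ r := fun m => by
    rw [hh0]; refine div_le_self hr0.le ?_
    have : (0 : ℝ) ≤ m := Nat.cast_nonneg m
    linarith
  have hh0lim : Tendsto h0 atTop (𝓝 0) := by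
    have := (tendsto_one_div_add_atTop_nhds_zero_nat (𝕜 := ℝ)).const_mul r
    simpa [hh0, div_eq_mul_inv] using this
  have hcd : ∀ z ∈ Ω, ContDiffAt ℝ 3 u z := fun z hz => hu.contDiffAt (hΩ.mem_nhds hz)
  have hin : ∀ z ∈ Metric.closedBall y r, z ∈ Ω := fun z hz => hball (by
    rw [Metric.mem_closedBall] at hz; rw [Metric.mem_ball]; linarith)
  have hshift : ∀ m, ∀ z ∈ Metric.closedBall y r, ∀ k : Fin n,
      z + h0 m • EuclideanSpace.single k (1 : ℝ) ∈ Ω := by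
    intro m z hz k
    apply hball
    rw [Metric.mem_closedBall, dist_eq_norm] at hz
    rw [Metric.mem_ball, dist_eq_norm]
    have h1 : ‖h0 m • EuclideanSpace.single k (1 : ℝ)‖ ≤ r := by
      rw [norm_smul, Real.norm_of_nonneg (hh0pos m).le]; simpa using hh0le m
    calc ‖z + h0 m • EuclideanSpace.single k (1 : ℝ) - y‖
        = ‖(z - y) + h0 m • EuclideanSpace.single k (1 : ℝ)‖ := by congr 1; abel
      _ ≤ ‖z - y‖ + ‖h0 m • EuclideanSpace.single k (1 : ℝ)‖ := norm_add_le _ _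
      _ < R := by linarith
  have hyb : y ∈ Metric.closedBall y r := Metric.mem_closedBall_self hr0.le
  have hex : ∀ m, ∃ z ∈ Metric.closedBall y r,
      IsMaxOn (Phi u δ c (h0 m)) (Metric.closedBall y r) z := by
    intro m
    refine (isCompact_closedBall y r).exists_isMaxOn ⟨y, hyb⟩ fun z hz => ?_
    exact (contDiffAt_Phi (hcd z (hin z hz)) (fun k => hcd _ (hshift m z hz k)) δ
      c).continuousAt.continuousWithinAt
  choose X0 hX0 hX0max using hex
  obtain ⟨a, ha, φ, hφ, hlim⟩ := (isCompact_closedBall y r).tendsto_subseq hX0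
  set h : ℕ → ℝ := fun m => h0 (φ m)
  set X : ℕ → EuclideanSpace ℝ (Fin n) := fun m => X0 (φ m)
  have hne : ∀ m, h m ≠ 0 := fun m => (hh0pos _).ne'
  have hhlim : Tendsto h atTop (𝓝 0) := hh0lim.comp hφ.tendsto_atTop
  have hXlim : Tendsto X atTop (𝓝 a) := hlim
  have hay : a = y := by
    by_contra hcon
    have h1 := tendsto_Phi (hcd a (hin a ha)) hXlim hhlim hne δ c
    have h2 := tendsto_Phi (hcd y hy) (tendsto_const_nhds (x := y)) hhlim hne δ c
    have h3 := le_of_tendsto_of_tendsto' h2 h1 fun m => hX0max (φ m) hyb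
    exact absurd (hstrict a (hin a ha) hcon) (not_lt.2 h3)
  subst hay
  have hle : ∀ᶠ m in atTop, Lop (hess u (X m))⁻¹ (Phi u δ c (h m)) (X m) ≤ 0 := by
    filter_upwards [hXlim.eventually (Metric.ball_mem_nhds a hr0)] with m hm
    have hmem : X m ∈ Ω := hin _ (hX0 (φ m))
    refine Lop_nonpos (hpos _ hmem).inv.posSemidef
      (contDiffAt_Phi (hcd _ hmem) (fun k => hcd _ (hshift _ _ (hX0 (φ m)) k)) δ c) ?_
    exact (hX0max (φ m)).isLocalMax
      (mem_of_superset (Metric.isOpen_ball.mem_nhds hm) Metric.ball_subset_closedBall)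
  have hau := hcd a hy
  have hA := hMA a hy
  have hp : ∀ k, Tendsto (fun m => pd k u (X m)) atTop (𝓝 (pd k u a)) := fun k =>
    (contDiffAt_pd (m := 2) hau (by norm_num) k).continuousAt.tendsto.comp hXlim
  have hH : ∀ k l, Tendsto (fun m => hess u (X m) k l) atTop (𝓝 (hess u a k l)) := fun k l =>
    tendsto_pi_nhds.1 (tendsto_pi_nhds.1 ((continuousAt_hess hau).tendsto.comp hXlim) k) l
  have hb := tendsto_beta hau hXlim hhlim hne
  have hW := tendsto_LW hau hA hXlim hhlim hne
  have hdb := tendsto_dbeta hau hXlim hhlim hne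
  have htr := ((continuous_id.matrix_trace).tendsto _).comp (tendsto_hess_inv hau hA hXlim)
  have hmain := ((tendsto_finsetSum Finset.univ fun k _ => tendsto_finsetSum Finset.univ fun l _ =>
    ((((((tendsto_finsetSum Finset.univ fun m _ => hW m m).const_mul
      ((1 : Matrix (Fin n) (Fin n) ℝ) k l)).add ((hW k l).const_mul (-1))).mul
        ((hp k).mul (hp l))).add ((hb k l).mul ((hH k l).const_mul 2))).add
      ((((hdb k l k).mul (hp l)).add ((hdb k l l).mul (hp k))).const_mul 2))).add_const
        ((-(2 * ((n : ℝ) - 1))) * n)).add (htr.const_mul δ)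
  refine absurd (limit_pos hn hau (hpos a hy) hA hδ) (not_lt.2 (le_of_tendsto hmain ?_))
  filter_upwards [hle] with m hm
  rw [Lop_Phi hΩ hu hpos hMA (hin _ (hX0 (φ m))) (hshift _ _ (hX0 (φ m)))] at hm
  exact hm

end Limit

/-! ### The maximum principle -/

/-- Theorem 1.2 (first part): `ψ = Σ b^{kl} u_k u_l − 2(n−1)u` attains its maximum
on the boundary. -/
theorem max_principle_psi {n : ℕ} (hn : 2 ≤ n)
    (Ω U : Set (EuclideanSpace ℝ (Fin n)))
    (hΩo : IsOpen Ω) (hΩc : Convex ℝ Ω) (hΩb : Bornology.IsBounded Ω)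
    (hUo : IsOpen U) (hUcl : closure Ω ⊆ U)
    (u : EuclideanSpace ℝ (Fin n) → ℝ)
    (hu : ContDiffOn ℝ 3 u U)
    (hpos : ∀ x ∈ Ω, (hess u x).PosDef)
    (hMA : ∀ x ∈ Ω, (hess u x).det = 1)
    (hbd : ∀ x ∈ frontier Ω, u x = 0) :
    ∀ x ∈ Ω, psiFn u x ≤ sSup (psiFn u '' frontier Ω) := by
  intro x₀ hx₀
  by_contra! hlt
  have hcd : ∀ z ∈ closure Ω, ContDiffAt ℝ 3 u z := fun z hz =>
    hu.contDiffAt (hUo.mem_nhds (hUcl hz))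
  have hcompact : IsCompact (closure Ω) := hΩb.isCompact_closure
  have hcont : ContinuousOn (psiFn u) (closure Ω) := by
    intro z hz
    have hp : ∀ k, ContinuousAt (pd k u) z := fun k =>
      (contDiffAt_pd (m := 2) (hcd z hz) (by norm_num) k).continuousAt
    have hH : ∀ k l, ContinuousAt (fun w => hess u w k l) z := fun k l =>
      continuousAt_pi.1 (continuousAt_pi.1 (continuousAt_hess (hcd z hz)) k) l
    have hu' := (hcd z hz).continuousAt
    have hb : ∀ k l, ContinuousAt (fun w => bMat u w k l) z := by
      intro k l
      simp only [bMat, Matrix.sub_apply, Matrix.smul_apply, smul_eq_mul]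
      have : ContinuousAt (fun w => (hess u w).trace) z :=
        (continuous_id.matrix_trace).continuousAt.comp (continuousAt_hess (hcd z hz))
      exact (this.mul continuousAt_const).sub (hH k l)
    have : ContinuousAt (psiFn u) z := by
      unfold psiFn
      refine ContinuousAt.sub ?_ (continuousAt_const.mul hu')
      exact tendsto_finsetSum _ fun k _ => tendsto_finsetSum _ fun l _ =>
        ((hb k l).mul (hp k)).mul (hp l)
    exact this.continuousWithinAt
  have hbdd : BddAbove (psiFn u '' frontier Ω) :=
    (hcompact.bddAbove_image hcont).mono (Set.image_mono frontier_subset_closure)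
  obtain ⟨R, hR0, hR⟩ := hcompact.isBounded.exists_pos_norm_le
  -- `δ` is so small that adding `δ |x|²` cannot move the maximum to the boundary.
  set δ := (psiFn u x₀ - sSup (psiFn u '' frontier Ω)) / (2 * R ^ 2) with hδdef
  have hδ : 0 < δ := div_pos (by linarith) (by positivity)
  have hδR : δ * R ^ 2 < psiFn u x₀ - sSup (psiFn u '' frontier Ω) := by
    have : δ * R ^ 2 = (psiFn u x₀ - sSup (psiFn u '' frontier Ω)) / 2 := by
      rw [hδdef]; field_simp
    rw [this]; linarith
  obtain ⟨y, hy, hmax⟩ := hcompact.exists_isMaxOn (f := fun z => psiFn u z + δ * ‖z‖ ^ 2)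
    ⟨x₀, subset_closure hx₀⟩
    (hcont.add (continuous_const.mul (continuous_norm.pow 2)).continuousOn)
  have hyΩ : y ∈ Ω := by
    by_contra hcon
    have hyf : y ∈ frontier Ω := by rw [hΩo.frontier_eq]; exact ⟨hy, hcon⟩
    have h1 : psiFn u x₀ + δ * ‖x₀‖ ^ 2 ≤ psiFn u y + δ * ‖y‖ ^ 2 := hmax (subset_closure hx₀)
    have h2 := le_csSup hbdd (Set.mem_image_of_mem _ hyf)
    have h3 : ‖y‖ ^ 2 ≤ R ^ 2 := pow_le_pow_left₀ (norm_nonneg _) (hR y hy) 2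
    have h4 := mul_le_mul_of_nonneg_left h3 hδ.le
    have h5 : 0 ≤ δ * ‖x₀‖ ^ 2 := by positivity
    linarith
  -- `δ |z|² - δ/2 |z - y|²` differs from `quad δ y z` by a constant.
  have hquad : ∀ z, quad δ y z = δ * ‖z‖ ^ 2 - δ / 2 * ‖z - y‖ ^ 2 + δ / 2 * ‖y‖ ^ 2 := by
    intro z
    simp only [quad, EuclideanSpace.norm_sq_eq, Finset.mul_sum, Real.norm_eq_abs, sq_abs]
    rw [← Finset.sum_sub_distrib, ← Finset.sum_add_distrib]
    refine Finset.sum_congr rfl fun i _ => ?_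
    simp only [PiLp.sub_apply]
    ring
  refine no_strict_max hn hΩo (hu.mono (subset_closure.trans hUcl)) hpos hMA hδ y hyΩ ?_
  intro z hz hzy
  have h1 : psiFn u z + δ * ‖z‖ ^ 2 ≤ psiFn u y + δ * ‖y‖ ^ 2 := hmax (subset_closure hz)
  have h2 : 0 < ‖z - y‖ := norm_pos_iff.2 (sub_ne_zero.2 hzy)
  have h3 : 0 < δ / 2 * ‖z - y‖ ^ 2 := by positivity
  rw [hquad, hquad, sub_self, norm_zero]
  linarith
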